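/- For every polytope P of even dimension 2k in ℝ^{2k} with 0 in its interior, g_k(P) = g_k(P*), where P* is the polar polytope of P. -/

import Mathlib

open Classical Polynomial

section PolytopeDefs

variable {V : Type*} [AddCommGroup V] [Module ℝ V]

/-- A polytope: the convex hull of finitely many points. -/
def IsPolytope (P : Set V) : Prop := ∃ S : Finset V, P = convexHull ℝ (S : Set V)

/-- Faces of a polytope (or of a cone): the set itself, the empty face, and the
sets of maximizers of linear functionals (equivalently, intersections with
supporting hyperplanes). -/
def IsFace (P F : Set V) : Prop :=
  F = P ∨ F = ∅ ∨ ∃ l : V →ₗ[ℝ] ℝ, F = {x | x ∈ P ∧ ∀ y ∈ P, l y ≤ l x}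

/-- Dimension of a polytope: the dimension of its affine span, with the
convention `pdim ∅ = -1`. -/
noncomputable def pdim (P : Set V) : ℤ :=
  if P = ∅ then -1 else (Module.finrank ℝ (affineSpan ℝ P).direction : ℤ)

/-- The `g`-truncation: from the toric `h`-polynomial of a `d`-dimensional
polytope to its toric `g`-polynomial, via `g_k = h_k - h_{k-1}` for
`0 ≤ k ≤ d/2`, with `h_{-1} = 0`. -/
noncomputable def truncG (d : ℤ) (h : Polynomial ℚ) : Polynomial ℚ :=
  ∑ k ∈ Finset.range (d.toNat / 2 + 1),
    Polynomial.C (h.coeff k - if k = 0 then 0 else h.coeff (k - 1)) * Polynomial.X ^ k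

/-- Fuelled recursion computing the toric `h`-polynomial of the interval `[F,G]`
of a face lattice (with `F` playing the role of the empty face):
`h([F,G],t) = ∑_{F ≤ G' < G} g([F,G'],t) · (t-1)^{dim G - dim G' - 1}`. -/
noncomputable def relHAux : ℕ → Set V → Set V → Polynomial ℚ
  | 0, _, _ => 1
  | n + 1, F, G =>
      if G = F then 1
      else ∑ᶠ G' ∈ {G' : Set V | IsFace G G' ∧ F ⊆ G' ∧ G' ≠ G},
        truncG (pdim G' - pdim F - 1) (relHAux n F G') *
          (Polynomial.X - 1) ^ (pdim G - pdim G' - 1).toNat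

/-- The toric `h`-polynomial of the interval `[F,G]` in a face lattice. -/
noncomputable def relH (F G : Set V) : Polynomial ℚ := relHAux (pdim G + 1).toNat F G

/-- The toric `g`-polynomial of the interval `[F,G]` in a face lattice;
`relG F P` is the polynomial `g(P/F, t)`. -/
noncomputable def relG (F G : Set V) : Polynomial ℚ :=
  truncG (pdim G - pdim F - 1) (relH F G)

/-- The toric `h`-polynomial `h(P,t)` of a polytope `P`. -/
noncomputable def toricH (P : Set V) : Polynomial ℚ := relH ∅ P

/-- The toric `g`-polynomial `g(P,t)` of a polytope `P`. -/
noncomputable def toricG (P : Set V) : Polynomial ℚ := relG ∅ P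

end PolytopeDefs
/-- The polar polytope `P* = {w | ⟨v,w⟩ ≥ -1 for all v ∈ P}` of a polytope in
`ℝ^n` (with the standard inner product). -/
def polarSet {n : ℕ} (P : Set (Fin n → ℝ)) : Set (Fin n → ℝ) :=
  {w | ∀ v ∈ P, -1 ≤ ∑ j, v j * w j}

/-!
The face lattice of `P` is Eulerian: on a cone cut by hyperplanes, the alternating count of open
cells is unchanged when one cell is split by a further hyperplane, and this yields Euler's relation
on every interval. In an Eulerian poset the toric recursion says that `∑ g(F, t) (t - 1)^(rank)` is
`g` with reversed coefficients, and the same holds for the dual poset, which is the face lattice of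
`P*`. Inverting both identities gives Stanley's convolution identity
`∑ F, (-1)^(dim F) g(F, t) g((P/F)*, t) = 0`. Since `g(F, t)` has degree at most `dim F / 2`, when
`dim P = 2k` only the terms `F = ∅` and `F = P` reach degree `k`, and they give
`g_k(P) = g_k(P*)`.
-/

/-! ### Reflected polynomials -/

section Reflection

variable {R : Type*}

theorem reflect_finsetSum [Semiring R] {ι : Type*} (n : ℕ) (s : Finset ι) (p : ι → R[X]) :
    reflect n (∑ i ∈ s, p i) = ∑ i ∈ s, reflect n (p i) :=
  map_sum (⟨⟨reflect n, reflect_zero⟩, fun p q => reflect_add p q n⟩ : R[X] →+ R[X]) p s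

theorem natDegree_X_sub_one_pow_le [Ring R] (m : ℕ) : ((X - 1 : R[X]) ^ m).natDegree ≤ m := by
  simpa using natDegree_pow_le_of_le m (natDegree_X_sub_C_le (1 : R))

variable [CommRing R]

theorem reflect_X_sub_one_pow (m : ℕ) : reflect m ((X - 1 : R[X]) ^ m) = (1 - X) ^ m := by
  induction m with
  | zero => simp
  | succ m ih =>
    have reflect_X_sub_one : reflect 1 (X - 1 : R[X]) = 1 - X := by
      rw [reflect_sub, reflect_one_X, reflect_one, pow_one]
    rw [pow_succ, reflect_mul _ _ (natDegree_X_sub_one_pow_le m)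
      (by simpa using natDegree_X_sub_one_pow_le (R := R) 1), ih, reflect_X_sub_one, pow_succ]

theorem reflect_mul_X_sub_one_pow {p : R[X]} {m n : ℕ} (hp : p.natDegree ≤ m) (hmn : m ≤ n) :
    reflect n (p * (X - 1) ^ (n - m)) = reflect m p * (1 - X) ^ (n - m) := by
  have h := reflect_mul p ((X - 1) ^ (n - m)) hp (natDegree_X_sub_one_pow_le (n - m))
  rwa [reflect_X_sub_one_pow, Nat.add_sub_cancel' hmn] at h

theorem eq_zero_of_reflect_eq_self {p : R[X]} {n : ℕ} (hp : 2 * p.natDegree < n)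
    (hreflect : reflect n p = p) : p = 0 := by
  ext i
  rw [coeff_zero]
  by_cases hi : p.natDegree < i
  · exact coeff_eq_zero_of_natDegree_lt hi
  · rw [← hreflect, coeff_reflect, revAt_le (by lia)]
    exact coeff_eq_zero_of_natDegree_lt (by lia)

end Reflection

theorem coeff_truncG (d : ℤ) (h : ℚ[X]) (k : ℕ) :
    (truncG d h).coeff k = if k ≤ d.toNat / 2 then -((X - 1) * h).coeff k else 0 := by
  have coeff_succ_sub : h.coeff k - (if k = 0 then 0 else h.coeff (k - 1)) =
      -((X - 1) * h).coeff k := by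
    rw [sub_mul, one_mul, coeff_sub]
    cases k <;> simp [coeff_X_mul]
  simp only [truncG, finsetSum_coeff, coeff_C_mul, coeff_X_pow, mul_ite, mul_one, mul_zero,
    Finset.sum_ite_eq, Finset.mem_range, Nat.lt_succ_iff, coeff_succ_sub]

theorem natDegree_truncG_le (d : ℤ) (h : ℚ[X]) : (truncG d h).natDegree ≤ d.toNat / 2 :=
  natDegree_le_iff_coeff_eq_zero.2 fun k hk => by rw [coeff_truncG, if_neg (by lia)]

theorem add_truncG_eq_reflect {n : ℕ} (hn : 0 < n) {h : ℚ[X]}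
    (hanti : reflect n ((X - 1) * h) = -((X - 1) * h)) :
    (X - 1) * h + truncG ((n : ℤ) - 1) h = reflect n (truncG ((n : ℤ) - 1) h) := by
  have hn' : ((n : ℤ) - 1).toNat = n - 1 := by lia
  generalize hQ : (X - 1) * h = Q at *
  have coeff_anti (i : ℕ) : Q.coeff (revAt n i) = -Q.coeff i := by
    rw [← coeff_reflect, hanti, coeff_neg]
  ext i
  rw [coeff_add, coeff_reflect, coeff_truncG, coeff_truncG, hQ, hn', coeff_anti]
  by_cases hi : i ≤ n
  · rw [revAt_le hi]
    rcases lt_trichotomy (2 * i) n with h | h | h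
    · rw [if_pos (by lia), if_neg (by lia), add_neg_cancel]
    · have hmid := coeff_anti i
      rw [revAt_le hi, show n - i = i by lia] at hmid
      rw [if_neg (by lia), if_neg (by lia)]
      linarith
    · rw [if_neg (by lia), if_pos (by lia), add_zero, neg_neg]
  · have hself := coeff_anti i
    rw [revAt_eq_self_of_lt (not_le.1 hi)] at hself ⊢
    rw [if_neg (by lia), if_neg (by lia)]
    linarith

/-! ### Eulerian posets and the Kazhdan–Lusztig–Stanley identity -/

section Eulerian

variable {α : Type*} [PartialOrder α] [LocallyFiniteOrder α] [OrderBot α]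

/-- `r` is a rank function making `α` an Eulerian poset: in every nontrivial interval the ranks of
even and of odd parity are equally frequent. Consecutive ranks along a covering relation are not
required, only strict monotonicity. -/
structure IsEulerianRank (r : α → ℕ) : Prop where
  strictMono : StrictMono r
  map_bot : r ⊥ = 0
  alternating_sum_Icc : ∀ x y, x < y → ∑ z ∈ Finset.Icc x y, (-1 : ℚ) ^ r z = 0

/-- `g` assigns to each `y` the toric `g`-polynomial of the interval `[⊥, y]`, computed with respect
to the rank function `r`; the rank of a face is its dimension plus one. -/
structure IsToricG (r : α → ℕ) (g : α → ℚ[X]) : Prop where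
  map_bot : g ⊥ = 1
  eq_truncG : ∀ y, y ≠ ⊥ →
    g y = truncG ((r y : ℤ) - 1) (∑ z ∈ Finset.Iio y, g z * (X - 1) ^ (r y - r z - 1))

theorem neg_one_pow_sub {R : Type*} [Monoid R] [HasDistribNeg R] {a b : ℕ} (hab : a ≤ b) :
    (-1 : R) ^ (b - a) = (-1) ^ b * (-1) ^ a := by
  obtain ⟨c, rfl⟩ := Nat.exists_eq_add_of_le hab
  rw [Nat.add_sub_cancel_left, ← pow_add, show a + c + a = 2 * a + c by ring, pow_add, pow_mul]
  simp

variable {r : α → ℕ} {g : α → ℚ[X]}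

theorem IsToricG.natDegree_le (hg : IsToricG r g) (y : α) :
    (g y).natDegree ≤ (r y - 1) / 2 := by
  by_cases hy : y = ⊥
  · simp [hy, hg.map_bot]
  · rw [hg.eq_truncG y hy]
    exact (natDegree_truncG_le _ _).trans (by lia)

theorem IsToricG.natDegree_le_rank (hg : IsToricG r g) (y : α) : (g y).natDegree ≤ r y :=
  (hg.natDegree_le y).trans (by lia)

theorem IsEulerianRank.alternating_sum_Ico (hr : IsEulerianRank r) {x y : α} (hxy : x < y) :
    ∑ z ∈ Finset.Ico x y, (-1 : ℚ) ^ (r y - r z) = -1 := by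
  have split : (-1 : ℚ) ^ r y + ∑ z ∈ Finset.Ico x y, (-1 : ℚ) ^ r z = 0 := by
    rw [← hr.alternating_sum_Icc x y hxy, ← Finset.Ico_insert_right hxy.le,
      Finset.sum_insert Finset.right_notMem_Ico]
  calc ∑ z ∈ Finset.Ico x y, (-1 : ℚ) ^ (r y - r z)
      = (-1) ^ r y * ∑ z ∈ Finset.Ico x y, (-1 : ℚ) ^ r z := by
        rw [Finset.mul_sum]
        exact Finset.sum_congr rfl fun z hz =>
          neg_one_pow_sub (hr.strictMono.monotone (Finset.mem_Ico.1 hz).2.le)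
    _ = -1 := by
        rw [eq_neg_of_add_eq_zero_right split, mul_neg, ← mul_pow]
        simp

theorem one_sub_X_pow {R : Type*} [CommRing R] (m : ℕ) :
    (1 - X : R[X]) ^ m = (X - 1) ^ m * C ((-1) ^ m) := by
  rw [C_pow, ← mul_pow]
  congr 1
  simp

/-- The Eulerian relations make the sum of the kernel over the proper part antisymmetric as soon as
the identity `sum_Iic_mul_X_sub_one_pow` holds strictly below `y`. -/
theorem IsEulerianRank.reflect_sum_Iio (hr : IsEulerianRank r) (hg : IsToricG r g) (y : α)
    (ih : ∀ z < y, ∑ x ∈ Finset.Iic z, g x * (X - 1) ^ (r z - r x) = reflect (r z) (g z)) :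
    reflect (r y) (∑ z ∈ Finset.Iio y, g z * (X - 1) ^ (r y - r z)) =
      -∑ z ∈ Finset.Iio y, g z * (X - 1) ^ (r y - r z) := by
  have mono := hr.strictMono.monotone
  calc reflect (r y) (∑ z ∈ Finset.Iio y, g z * (X - 1) ^ (r y - r z))
      = ∑ z ∈ Finset.Iio y, (∑ x ∈ Finset.Iic z, g x * (X - 1) ^ (r z - r x)) *
          (1 - X) ^ (r y - r z) := by
        rw [reflect_finsetSum]
        refine Finset.sum_congr rfl fun z hz => ?_
        have hzy := Finset.mem_Iio.1 hz
        rw [reflect_mul_X_sub_one_pow (hg.natDegree_le_rank z) (mono hzy.le), ih z hzy]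
    _ = ∑ z ∈ Finset.Iio y, ∑ x ∈ Finset.Iic z,
          g x * (X - 1) ^ (r y - r x) * C ((-1) ^ (r y - r z)) := by
        refine Finset.sum_congr rfl fun z hz => ?_
        rw [Finset.sum_mul]
        refine Finset.sum_congr rfl fun x hx => ?_
        have hzy := mono (Finset.mem_Iio.1 hz).le
        have hxz := mono (Finset.mem_Iic.1 hx)
        rw [one_sub_X_pow, show r y - r x = (r z - r x) + (r y - r z) by lia, pow_add]
        ring
    _ = ∑ x ∈ Finset.Iio y, ∑ z ∈ Finset.Ico x y,
          g x * (X - 1) ^ (r y - r x) * C ((-1) ^ (r y - r z)) :=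
        Finset.sum_comm' fun z x => by
          simp only [Finset.mem_Iio, Finset.mem_Iic, Finset.mem_Ico]
          exact ⟨fun h => ⟨⟨h.2, h.1⟩, h.2.trans_lt h.1⟩, fun h => ⟨h.1.2, h.1.1⟩⟩
    _ = -∑ x ∈ Finset.Iio y, g x * (X - 1) ^ (r y - r x) := by
        rw [← Finset.sum_neg_distrib]
        refine Finset.sum_congr rfl fun x hx => ?_
        rw [← Finset.mul_sum, ← map_sum, hr.alternating_sum_Ico (Finset.mem_Iio.1 hx)]
        simp

theorem IsEulerianRank.sum_Iic_mul_X_sub_one_pow (hr : IsEulerianRank r) (hg : IsToricG r g)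
    (y : α) : ∑ z ∈ Finset.Iic y, g z * (X - 1) ^ (r y - r z) = reflect (r y) (g y) := by
  have := hr.strictMono.wellFoundedLT
  induction y using WellFoundedLT.induction with
  | ind y ih =>
  by_cases hy : y = ⊥
  · simp [hy, hg.map_bot, hr.map_bot]
  have rank_pos : 0 < r y := (Nat.zero_le _).trans_lt (hr.strictMono (bot_lt_iff_ne_bot.2 hy))
  have kernel_eq : ∑ z ∈ Finset.Iio y, g z * (X - 1) ^ (r y - r z) =
      (X - 1) * ∑ z ∈ Finset.Iio y, g z * (X - 1) ^ (r y - r z - 1) := by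
    rw [Finset.mul_sum]
    refine Finset.sum_congr rfl fun z hz => ?_
    have hzy := hr.strictMono (Finset.mem_Iio.1 hz)
    rw [mul_left_comm, ← pow_succ', Nat.sub_add_cancel (by lia)]
  have anti := hr.reflect_sum_Iio hg y ih
  rw [kernel_eq] at anti
  rw [← Finset.Iio_insert, Finset.sum_insert Finset.notMem_Iio_self, kernel_eq, Nat.sub_self,
    pow_zero, mul_one, add_comm, hg.eq_truncG y hy]
  exact add_truncG_eq_reflect rank_pos anti

theorem IsEulerianRank.sum_Iic_reflect_mul_one_sub_X_pow (hr : IsEulerianRank r)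
    (hg : IsToricG r g) (y : α) :
    ∑ z ∈ Finset.Iic y, reflect (r z) (g z) * (1 - X) ^ (r y - r z) = g y := by
  rw [← reflect_reflect (N := r y) (p := g y), ← hr.sum_Iic_mul_X_sub_one_pow hg,
    reflect_finsetSum]
  exact Finset.sum_congr rfl fun z hz => (reflect_mul_X_sub_one_pow (hg.natDegree_le_rank z)
    (hr.strictMono.monotone (Finset.mem_Iic.1 hz))).symm

end Eulerian

section EulerianDual

open OrderDual

variable {α : Type*} [PartialOrder α] [LocallyFiniteOrder α] [BoundedOrder α]
  {r : α → ℕ} {g : α → ℚ[X]} {f : αᵒᵈ → ℚ[X]}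

/-- The rank function of the order dual: the rank of the interval from an element to the top. -/
def dualRank (r : α → ℕ) (z : αᵒᵈ) : ℕ := r ⊤ - r (ofDual z)

theorem IsEulerianRank.le_rank_top (hr : IsEulerianRank r) (z : α) : r z ≤ r ⊤ :=
  hr.strictMono.monotone le_top

theorem IsEulerianRank.dual (hr : IsEulerianRank r) : IsEulerianRank (dualRank r) where
  strictMono a b hab := by
    have hlt : r (ofDual b) < r (ofDual a) := hr.strictMono hab
    have := hr.le_rank_top (ofDual a)
    simp only [dualRank]
    lia
  map_bot := Nat.sub_self _
  alternating_sum_Icc x y hxy := by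
    simp only [Finset.Icc_orderDual_def, Finset.sum_map, Equiv.coe_toEmbedding, dualRank,
      ofDual_toDual, neg_one_pow_sub (hr.le_rank_top _)]
    rw [← Finset.mul_sum, hr.alternating_sum_Icc (ofDual y) (ofDual x) hxy, mul_zero]

theorem IsEulerianRank.reflect_sum_mul_dual [Fintype α] (hr : IsEulerianRank r) (hg : IsToricG r g)
    (hf : IsToricG (dualRank r) f) :
    reflect (r ⊤) (∑ z, C ((-1) ^ r z) * (g z * f (toDual z))) =
      ∑ z, C ((-1) ^ r z) * (g z * f (toDual z)) := by
  have mono := hr.strictMono.monotone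
  set f' : α → ℚ[X] := fun z => reflect (r ⊤ - r z) (f (toDual z)) with hf'
  have dual_identity (x : α) :
      ∑ z ∈ Finset.Ici x, f' z * (1 - X) ^ (r z - r x) = f (toDual x) := by
    rw [← hr.dual.sum_Iic_reflect_mul_one_sub_X_pow hf (toDual x)]
    refine Finset.sum_nbij' toDual ofDual (fun z hz => by simpa using hz)
      (fun z hz => by simpa [le_toDual] using hz) (fun _ _ => rfl) (fun _ _ => rfl) fun z hz => ?_
    have := mono (Finset.mem_Ici.1 hz)
    have := hr.le_rank_top z
    simp only [dualRank, hf', ofDual_toDual]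
    rw [show r ⊤ - r x - (r ⊤ - r z) = r z - r x by lia]
  calc reflect (r ⊤) (∑ z, C ((-1) ^ r z) * (g z * f (toDual z)))
      = ∑ z, C ((-1) ^ r z) * ((∑ x ∈ Finset.Iic z, g x * (X - 1) ^ (r z - r x)) * f' z) := by
        rw [reflect_finsetSum]
        refine Finset.sum_congr rfl fun z _ => ?_
        have hmul := reflect_mul _ _ (hg.natDegree_le_rank z) (hf.natDegree_le_rank (toDual z))
        simp only [dualRank, ofDual_toDual, Nat.add_sub_cancel' (hr.le_rank_top z)] at hmul
        rw [reflect_C_mul, hmul, hr.sum_Iic_mul_X_sub_one_pow hg]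
    _ = ∑ x, ∑ z ∈ Finset.Ici x,
          C ((-1) ^ r z) * (g x * (X - 1) ^ (r z - r x) * f' z) := by
        simp only [Finset.sum_mul, Finset.mul_sum]
        exact Finset.sum_comm' (by simp)
    _ = ∑ x, C ((-1) ^ r x) * (g x * f (toDual x)) := by
        refine Finset.sum_congr rfl fun x _ => ?_
        rw [← dual_identity x, Finset.mul_sum, Finset.mul_sum]
        refine Finset.sum_congr rfl fun z hz => ?_
        have sign : (-1 : ℚ) ^ r z = (-1) ^ r x * (-1) ^ (r z - r x) := by
          rw [← pow_add, Nat.add_sub_cancel' (mono (Finset.mem_Ici.1 hz))]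
        rw [one_sub_X_pow, sign, C_mul]
        ring

theorem natDegree_C_mul_mul_le {R : Type*} [CommSemiring R] {c : R} {p q : R[X]} {m n : ℕ}
    (hp : p.natDegree ≤ m) (hq : q.natDegree ≤ n) : (C c * (p * q)).natDegree ≤ m + n :=
  (natDegree_C_mul_le _ _).trans (natDegree_mul_le_of_le hp hq)

theorem IsEulerianRank.sum_mul_dual_eq_zero [Fintype α] (hr : IsEulerianRank r) (hg : IsToricG r g)
    (hf : IsToricG (dualRank r) f) (hpos : 0 < r ⊤) :
    ∑ z, C ((-1) ^ r z) * (g z * f (toDual z)) = 0 := by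
  refine eq_zero_of_reflect_eq_self (n := r ⊤) ?_ (hr.reflect_sum_mul_dual hg hf)
  have natDegree_le : (∑ z, C ((-1) ^ r z) * (g z * f (toDual z))).natDegree ≤ (r ⊤ - 1) / 2 :=
    natDegree_sum_le_of_forall_le _ _ fun z _ =>
      (natDegree_C_mul_mul_le (hg.natDegree_le z) (hf.natDegree_le _)).trans <| by
        have := hr.le_rank_top z
        simp only [dualRank, ofDual_toDual]
        lia
  lia

theorem IsEulerianRank.coeff_middle_eq (hr : IsEulerianRank r) (hg : IsToricG r g)
    (hf : IsToricG (dualRank r) f) {k : ℕ} (hk : r ⊤ = 2 * k + 1) :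
    (g ⊤).coeff k = (f (toDual ⊥)).coeff k := by
  have : Fintype α := ⟨Finset.Icc ⊥ ⊤, by simp⟩
  have coeff_sum := congrArg (coeff · k) (hr.sum_mul_dual_eq_zero hg hf (by lia))
  have bot_ne_top : (⊥ : α) ≠ ⊤ := fun h => by have := hr.map_bot; rw [h] at this; lia
  have coeff_proper (z : α) (hz : z ∉ ({⊥, ⊤} : Finset α)) :
      (C ((-1) ^ r z) * (g z * f (toDual z))).coeff k = 0 := by
    simp only [Finset.mem_insert, Finset.mem_singleton, not_or] at hz
    have hbot := hr.strictMono (bot_lt_iff_ne_bot.2 hz.1)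
    have htop := hr.strictMono (lt_top_iff_ne_top.2 hz.2)
    refine coeff_eq_zero_of_natDegree_lt ((natDegree_C_mul_mul_le (hg.natDegree_le z)
      (hf.natDegree_le _)).trans_lt ?_)
    simp only [dualRank, ofDual_toDual]
    lia
  have top_eq_one : f (toDual ⊤) = 1 := hf.map_bot
  simp only [finsetSum_coeff, coeff_zero] at coeff_sum
  rw [← Finset.sum_subset (Finset.subset_univ {⊥, ⊤}) fun z _ => coeff_proper z,
    Finset.sum_pair bot_ne_top, hr.map_bot, hk, hg.map_bot, top_eq_one] at coeff_sum
  simp only [pow_succ, pow_mul, coeff_C_mul] at coeff_sum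
  exact (sub_eq_zero.1 (by simpa [← sub_eq_add_neg] using coeff_sum)).symm

end EulerianDual

/-! ### Posets parametrizing the faces of a convex set -/

section FaceParametrization

variable {V : Type*} [AddCommGroup V] [Module ℝ V] {α : Type*} [PartialOrder α]

theorem isFace_empty (P : Set V) : IsFace P ∅ := Or.inr (Or.inl rfl)

theorem pdim_empty : pdim (∅ : Set V) = -1 := if_pos rfl

theorem pdim_of_nonempty {P : Set V} (hP : P.Nonempty) :
    pdim P = Module.finrank ℝ (vectorSpan ℝ P) := by
  rw [pdim, if_neg hP.ne_empty, direction_affineSpan]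

/-- `Φ` realizes the poset `α` as a collection of convex sets such that the faces of each `Φ y` are
exactly the `Φ z` with `z ≤ y`, and `r` records dimensions shifted by one. -/
structure IsFaceParametrization (Φ : α → Set V) (r : α → ℕ) : Prop where
  injective : Function.Injective Φ
  pdim_eq : ∀ y, pdim (Φ y) = (r y : ℤ) - 1
  isFace_iff : ∀ y G, IsFace (Φ y) G ↔ ∃ z ≤ y, Φ z = G

namespace IsFaceParametrization

variable {Φ : α → Set V} {r : α → ℕ}

theorem toricG_eq_truncG (hΦ : IsFaceParametrization Φ r) (y : α) :
    toricG (Φ y) = truncG ((r y : ℤ) - 1) (relHAux (r y) ∅ (Φ y)) := by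
  rw [toricG, relG, relH, hΦ.pdim_eq, pdim_empty]
  congr 2 <;> lia

variable [OrderBot α]

theorem map_bot (hΦ : IsFaceParametrization Φ r) : Φ ⊥ = ∅ := by
  obtain ⟨z, hz, hΦz⟩ := (hΦ.isFace_iff ⊥ ∅).1 (isFace_empty _)
  rwa [le_bot_iff.1 hz] at hΦz

theorem rank_bot (hΦ : IsFaceParametrization Φ r) : r ⊥ = 0 := by
  have hdim := hΦ.pdim_eq ⊥
  rw [hΦ.map_bot, pdim_empty] at hdim
  lia

theorem relHAux_bot (hΦ : IsFaceParametrization Φ r) (m : ℕ) : relHAux m ∅ (Φ ⊥) = 1 := by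
  cases m with
  | zero => rfl
  | succ m => rw [relHAux, if_pos hΦ.map_bot]

variable [LocallyFiniteOrder α]

theorem relHAux_succ (hΦ : IsFaceParametrization Φ r) (m : ℕ) {y : α} (hy : y ≠ ⊥) :
    relHAux (m + 1) ∅ (Φ y) = ∑ z ∈ Finset.Iio y,
      truncG ((r z : ℤ) - 1) (relHAux m ∅ (Φ z)) * (X - 1) ^ (r y - r z - 1) := by
  have ne_empty : Φ y ≠ ∅ := hΦ.map_bot ▸ fun h => hy (hΦ.injective h)
  have properFaces_eq : {G | IsFace (Φ y) G ∧ ∅ ⊆ G ∧ G ≠ Φ y} =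
      Φ '' (Finset.Iio y : Set α) := by
    ext G
    simp only [Set.mem_ofPred_eq, hΦ.isFace_iff, Set.empty_subset, true_and, Set.mem_image,
      Finset.coe_Iio, Set.mem_Iio]
    constructor
    · rintro ⟨⟨z, hz, rfl⟩, hne⟩
      exact ⟨z, hz.lt_of_ne fun h => hne (congrArg Φ h), rfl⟩
    · rintro ⟨z, hz, rfl⟩
      exact ⟨⟨z, hz.le, rfl⟩, fun h => hz.ne (hΦ.injective h)⟩
  rw [relHAux, if_neg ne_empty, properFaces_eq, finsum_mem_image hΦ.injective.injOn,
    finsum_mem_coe_finset]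
  refine Finset.sum_congr rfl fun z _ => ?_
  rw [hΦ.pdim_eq, hΦ.pdim_eq, pdim_empty]
  congr 2 <;> lia

theorem relHAux_succ_of_rank_le (hΦ : IsFaceParametrization Φ r) (hr : StrictMono r) {m : ℕ} :
    ∀ {y : α}, r y ≤ m → relHAux (m + 1) ∅ (Φ y) = relHAux m ∅ (Φ y) := by
  induction m with
  | zero =>
    intro y hy
    have y_eq_bot : y = ⊥ := by
      by_contra hne
      have := hr (bot_lt_iff_ne_bot.2 hne)
      lia
    rw [y_eq_bot, hΦ.relHAux_bot, hΦ.relHAux_bot]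
  | succ m ih =>
    intro y hy
    by_cases hbot : y = ⊥
    · rw [hbot, hΦ.relHAux_bot, hΦ.relHAux_bot]
    rw [hΦ.relHAux_succ _ hbot, hΦ.relHAux_succ _ hbot]
    refine Finset.sum_congr rfl fun z hz => ?_
    have := hr (Finset.mem_Iio.1 hz)
    rw [ih (by lia)]

theorem relHAux_eq_of_rank_le (hΦ : IsFaceParametrization Φ r) (hr : StrictMono r) {m : ℕ} {y : α}
    (hm : r y ≤ m) : relHAux m ∅ (Φ y) = relHAux (r y) ∅ (Φ y) := by
  induction m, hm using Nat.le_induction with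
  | base => rfl
  | succ m hm ih => rw [hΦ.relHAux_succ_of_rank_le hr hm, ih]

theorem isToricG (hΦ : IsFaceParametrization Φ r) (hr : StrictMono r) :
    IsToricG r fun y => toricG (Φ y) where
  map_bot := by
    simp [hΦ.toricG_eq_truncG, hΦ.relHAux_bot, hΦ.rank_bot, truncG]
  eq_truncG y hy := by
    have rank_pos := hr (bot_lt_iff_ne_bot.2 hy)
    obtain ⟨m, hm⟩ : ∃ m, r y = m + 1 := ⟨r y - 1, by lia⟩
    have toricH_eq : relHAux (r y) ∅ (Φ y) =
        ∑ z ∈ Finset.Iio y, toricG (Φ z) * (X - 1) ^ (r y - r z - 1) := by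
      rw [show relHAux (r y) ∅ (Φ y) = relHAux (m + 1) ∅ (Φ y) by rw [hm], hΦ.relHAux_succ m hy]
      refine Finset.sum_congr rfl fun z hz => ?_
      have := hr (Finset.mem_Iio.1 hz)
      rw [hΦ.toricG_eq_truncG, hΦ.relHAux_eq_of_rank_le hr (by lia)]
    rw [hΦ.toricG_eq_truncG, toricH_eq]

end IsFaceParametrization

end FaceParametrization

/-! ### Euler's relation for polyhedral cones -/

section Euler

variable {E : Type*} [AddCommGroup E] [Module ℝ E]

open Filter Topology Module

/-- Algebraic openness: `U` is open along every line. It needs no topology on `E`. -/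
def IsLineOpen (U : Set E) : Prop := ∀ x ∈ U, ∀ y, ∀ᶠ t in 𝓝 (0 : ℝ), x + t • y ∈ U

theorem isLineOpen_univ : IsLineOpen (Set.univ : Set E) := fun _ _ _ => .of_forall fun _ => trivial

theorem IsLineOpen.inter {U W : Set E} (hU : IsLineOpen U) (hW : IsLineOpen W) :
    IsLineOpen (U ∩ W) := fun x hx y => (hU x hx.1 y).and (hW x hx.2 y)

theorem isLineOpen_setOf_pos (f : Dual ℝ E) : IsLineOpen {x | 0 < f x} := fun x hx y => by
  have tendsto : Tendsto (fun t : ℝ => f (x + t • y)) (𝓝 0) (𝓝 (f x)) := by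
    have : Continuous fun t : ℝ => f x + t * f y := by fun_prop
    simpa using this.tendsto 0
  exact tendsto.eventually (lt_mem_nhds hx)

theorem isLineOpen_setOf_forall_pos {ι : Type*} (f : ι → Dual ℝ E) (J : Finset ι) :
    IsLineOpen {x | ∀ j ∈ J, 0 < f j x} := fun x hx y =>
  J.eventually_all.2 fun j hj => isLineOpen_setOf_pos (f j) x (hx j hj) y

theorem isLineOpen_setOf_neg (f : Dual ℝ E) : IsLineOpen {x | f x < 0} := by
  simpa using isLineOpen_setOf_pos (-f)

/-- The Euler characteristic with compact supports of the slice `A ∩ U` of a convex open set `U`. -/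
noncomputable def sliceSign (A : Submodule ℝ E) (U : Set E) : ℚ :=
  if ((A : Set E) ∩ U).Nonempty then (-1) ^ finrank ℝ A else 0

theorem sliceSign_of_nonempty {A : Submodule ℝ E} {U : Set E} (h : ((A : Set E) ∩ U).Nonempty) :
    sliceSign A U = (-1) ^ finrank ℝ A := if_pos h

theorem sliceSign_of_eq_empty {A : Submodule ℝ E} {U : Set E} (h : (A : Set E) ∩ U = ∅) :
    sliceSign A U = 0 := if_neg (Set.not_nonempty_iff_eq_empty.2 h)

theorem finrank_inf_ker_add_one [FiniteDimensional ℝ E] {A : Submodule ℝ E} {f : Dual ℝ E}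
    (hf : ¬A ≤ LinearMap.ker f) : finrank ℝ ↥(A ⊓ LinearMap.ker f) + 1 = finrank ℝ A := by
  have restrict_ne_zero : f.domRestrict A ≠ 0 := fun h => hf fun x hx =>
    LinearMap.congr_fun h (⟨x, hx⟩ : A)
  rw [← Module.Dual.finrank_ker_add_one_of_ne_zero restrict_ne_zero]
  have ker_eq : LinearMap.ker (f.domRestrict A) = (LinearMap.ker f).comap A.subtype := rfl
  rw [ker_eq, ← Submodule.map_comap_subtype, Submodule.finrank_map_subtype_eq]

theorem IsLineOpen.exists_mem_pos {U : Set E} (hU : IsLineOpen U) {A : Submodule ℝ E}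
    {f : Dual ℝ E} (hf : ¬A ≤ LinearMap.ker f) {x : E} (hxA : x ∈ A) (hxU : x ∈ U)
    (hx : f x = 0) : ((A : Set E) ∩ (U ∩ {x | 0 < f x})).Nonempty := by
  obtain ⟨y, hyA, hy⟩ := SetLike.not_le_iff_exists.1 hf
  obtain ⟨t, ht, htpos⟩ := ((hU x hxU (f y • y)).filter_mono nhdsWithin_le_nhds |>.and
    (self_mem_nhdsWithin (a := (0 : ℝ)) (s := Set.Ioi 0))).exists
  refine ⟨_, A.add_mem hxA (A.smul_mem t (A.smul_mem (f y) hyA)), ht, ?_⟩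
  have fy_sq_pos : 0 < f y * f y := mul_self_pos.2 hy
  have value_pos : 0 < t * (f y * f y) := mul_pos htpos fy_sq_pos
  simpa [hx] using value_pos

theorem exists_mem_eq_zero_of_pos_of_neg {S : Set E} (hS : Convex ℝ S) (f : Dual ℝ E) {x y : E}
    (hx : x ∈ S) (hy : y ∈ S) (hfx : 0 < f x) (hfy : f y < 0) : ∃ z ∈ S, f z = 0 := by
  have hsum : 0 < f x - f y := by linarith
  refine ⟨(-f y / (f x - f y)) • x + (f x / (f x - f y)) • y,
    hS hx hy (div_nonneg (by linarith) hsum.le) (div_nonneg hfx.le hsum.le) ?_, ?_⟩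
  · field_simp
    ring
  · simp only [map_add, map_smul, smul_eq_mul]
    ring

theorem sliceSign_split_of_disjoint_ker {U : Set E} (hconv : Convex ℝ U) {A : Submodule ℝ E}
    {f : Dual ℝ E} (hdisj : ∀ x ∈ A, x ∈ U → f x ≠ 0) :
    sliceSign A U = sliceSign A (U ∩ {x | 0 < f x}) + sliceSign A (U ∩ {x | f x < 0}) := by
  have opposite_absurd {x y : E} (hx : x ∈ (A : Set E) ∩ U) (hy : y ∈ (A : Set E) ∩ U)
      (hfx : 0 < f x) (hfy : f y < 0) : False := by
    obtain ⟨z, hz, hfz⟩ := exists_mem_eq_zero_of_pos_of_neg (A.convex.inter hconv) f hx hy hfx hfy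
    exact hdisj z hz.1 hz.2 hfz
  rcases ((A : Set E) ∩ U).eq_empty_or_nonempty with hempty | ⟨x, hx⟩
  · have empty_of_subset {W : Set E} : (A : Set E) ∩ (U ∩ W) = ∅ := by
      rw [← Set.inter_assoc, hempty, Set.empty_inter]
    simp only [sliceSign_of_eq_empty, hempty, empty_of_subset, add_zero]
  rw [sliceSign_of_nonempty ⟨x, hx⟩]
  rcases lt_or_gt_of_ne (hdisj x hx.1 hx.2) with hneg | hpos
  · rw [sliceSign_of_nonempty (U := U ∩ {x | f x < 0}) ⟨x, hx.1, hx.2, hneg⟩,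
      sliceSign_of_eq_empty, zero_add]
    exact Set.eq_empty_of_forall_notMem fun y hy =>
      opposite_absurd ⟨hy.1, hy.2.1⟩ hx hy.2.2 hneg
  · rw [sliceSign_of_nonempty (U := U ∩ {x | 0 < f x}) ⟨x, hx.1, hx.2, hpos⟩,
      sliceSign_of_eq_empty, add_zero]
    exact Set.eq_empty_of_forall_notMem fun y hy =>
      opposite_absurd hx ⟨hy.1, hy.2.1⟩ hpos hy.2.2

theorem sliceSign_split [FiniteDimensional ℝ E] {U : Set E} (hconv : Convex ℝ U)
    (hopen : IsLineOpen U) (A : Submodule ℝ E) (f : Dual ℝ E) :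
    sliceSign A U = sliceSign A (U ∩ {x | 0 < f x}) + sliceSign (A ⊓ LinearMap.ker f) U +
      sliceSign A (U ∩ {x | f x < 0}) := by
  by_cases hA : A ≤ LinearMap.ker f
  · rw [inf_eq_left.2 hA, sliceSign_of_eq_empty (U := U ∩ {x | 0 < f x}),
      sliceSign_of_eq_empty (U := U ∩ {x | f x < 0}), zero_add, add_zero]
    · exact Set.eq_empty_of_forall_notMem fun x hx => hx.2.2.ne (hA hx.1)
    · exact Set.eq_empty_of_forall_notMem fun x hx => hx.2.2.ne' (hA hx.1)
  by_cases hmeet : ∃ x ∈ A, x ∈ U ∧ f x = 0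
  · obtain ⟨x, hxA, hxU, hfx⟩ := hmeet
    have neg_nonempty : ((A : Set E) ∩ (U ∩ {x | f x < 0})).Nonempty := by
      simpa using hopen.exists_mem_pos (f := -f) (by simpa using hA) hxA hxU (by simp [hfx])
    rw [sliceSign_of_nonempty ⟨x, hxA, hxU⟩, sliceSign_of_nonempty neg_nonempty,
      sliceSign_of_nonempty (hopen.exists_mem_pos hA hxA hxU hfx),
      sliceSign_of_nonempty (A := A ⊓ LinearMap.ker f) ⟨x, ⟨hxA, hfx⟩, hxU⟩,
      ← finrank_inf_ker_add_one hA]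
    ring
  · push Not at hmeet
    rw [sliceSign_of_eq_empty (A := A ⊓ LinearMap.ker f), add_zero]
    · exact sliceSign_split_of_disjoint_ker hconv hmeet
    · exact Set.eq_empty_of_forall_notMem fun x hx => hmeet x hx.1.1 hx.2 hx.1.2

variable {ι : Type*}

/-- The sum of `(-1) ^ dim` over those relatively open faces of the cone
`{x ∈ A | ∀ j ∈ J, 0 ≤ f j x}` that meet `U`; the term at `K` is the face on which exactly the
inequalities indexed by `K` are tight. -/
noncomputable def coneSum (f : ι → Dual ℝ E) (J : Finset ι) (A : Submodule ℝ E) (U : Set E) : ℚ :=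
  ∑ K ∈ J.powerset, sliceSign (A ⊓ ⨅ j ∈ K, LinearMap.ker (f j))
    (U ∩ {x | ∀ j ∈ J \ K, 0 < f j x})

theorem convex_setOf_forall_pos (f : ι → Dual ℝ E) (J : Finset ι) :
    Convex ℝ {x | ∀ j ∈ J, 0 < f j x} := by
  simp only [Set.ofPred_forall]
  exact convex_iInter₂ fun j _ => convex_halfSpace_gt (f j).isLinear 0

theorem coneSum_empty (f : ι → Dual ℝ E) (A : Submodule ℝ E) (U : Set E) :
    coneSum f ∅ A U = sliceSign A U := by
  simp [coneSum]

theorem coneSum_insert [FiniteDimensional ℝ E] (f : ι → Dual ℝ E) {J : Finset ι} {j : ι}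
    (hj : j ∉ J) (A : Submodule ℝ E) {U : Set E} (hconv : Convex ℝ U) (hopen : IsLineOpen U) :
    coneSum f (insert j J) A U = coneSum f J A U - coneSum f J A (U ∩ {x | f j x < 0}) := by
  have sdiff_left {K : Finset ι} (hK : K ∈ J.powerset) :
      U ∩ {x | ∀ i ∈ insert j J \ K, 0 < f i x} =
        (U ∩ {x | ∀ i ∈ J \ K, 0 < f i x}) ∩ {x | 0 < f j x} := by
    rw [Finset.insert_sdiff_of_notMem _ fun h => hj (Finset.mem_powerset.1 hK h)]
    ext x
    simp only [Set.mem_inter_iff, Set.mem_ofPred_eq, Finset.forall_mem_insert]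
    tauto
  have sdiff_both (K : Finset ι) : insert j J \ insert j K = J \ K := by
    rw [Finset.insert_sdiff_insert, Finset.sdiff_insert_of_notMem hj]
  have ker_insert (K : Finset ι) : A ⊓ ⨅ i ∈ insert j K, LinearMap.ker (f i) =
      (A ⊓ ⨅ i ∈ K, LinearMap.ker (f i)) ⊓ LinearMap.ker (f j) := by
    rw [Finset.iInf_insert, inf_assoc, inf_comm (LinearMap.ker (f j))]
  simp only [coneSum]
  rw [Finset.sum_powerset_insert hj, ← Finset.sum_add_distrib, ← Finset.sum_sub_distrib]
  refine Finset.sum_congr rfl fun K hK => ?_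
  rw [sdiff_left hK, sdiff_both, ker_insert, Set.inter_right_comm U {x | f j x < 0},
    eq_sub_iff_add_eq]
  exact (sliceSign_split (hconv.inter (convex_setOf_forall_pos f _))
    (hopen.inter (isLineOpen_setOf_forall_pos f _)) _ _).symm

theorem coneSum_eq_zero [FiniteDimensional ℝ E] (f : ι → Dual ℝ E) {J : Finset ι}
    (hJ : J.Nonempty) {A : Submodule ℝ E} {U : Set E} (hconv : Convex ℝ U) (hopen : IsLineOpen U)
    {p : E} (hpA : p ∈ A) (hpU : p ∈ U) (hp : ∀ j ∈ J, f j p < 0) : coneSum f J A U = 0 := by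
  induction hJ using Finset.Nonempty.cons_induction generalizing U with
  | singleton j =>
    rw [← insert_empty_eq, coneSum_insert f (Finset.notMem_empty j) A hconv hopen,
      coneSum_empty, coneSum_empty, sliceSign_of_nonempty ⟨p, hpA, hpU⟩,
      sliceSign_of_nonempty (U := U ∩ {x | f j x < 0})
        ⟨p, hpA, hpU, hp j (Finset.mem_singleton_self j)⟩, sub_self]
  | cons j J hj _ ih =>
    have hpJ : ∀ i ∈ J, f i p < 0 := fun i hi => hp i (Finset.mem_cons_of_mem hi)
    have convex_half : Convex ℝ (U ∩ {x | f j x < 0}) :=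
      hconv.inter (convex_halfSpace_lt (f j).isLinear 0)
    rw [Finset.cons_eq_insert, coneSum_insert f hj A hconv hopen, ih hconv hopen hpU hpJ,
      ih convex_half (hopen.inter (isLineOpen_setOf_neg (f j)))
        ⟨hpU, hp j (Finset.mem_cons_self j J)⟩ hpJ, sub_zero]

end Euler

section TightSets

open Filter Topology Module

variable {ι : Type*}

/-- `K` is the set of indices of the constraints `0 ≤ s i x` that are tight at some feasible `x`.
Such sets index the nonempty faces of the feasible region. -/
def IsTightSet {F X : Type*} [FunLike F X ℝ] (s : ι → F) (K : Finset ι) : Prop :=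
  ∃ x, (∀ i, 0 ≤ s i x) ∧ ∀ i, s i x = 0 ↔ i ∈ K

theorem eventually_forall_add_mul_pos [Finite ι] (a b : ι → ℝ) :
    ∀ᶠ t in 𝓝 (0 : ℝ), ∀ i, 0 < a i → 0 < a i + t * b i := by
  refine eventually_all.2 fun i => eventually_imp_distrib_left.2 fun hi => ?_
  have tendsto : Tendsto (fun t : ℝ => a i + t * b i) (𝓝 0) (𝓝 (a i)) := by
    have : Continuous fun t : ℝ => a i + t * b i := by fun_prop
    simpa using this.tendsto 0
  exact tendsto.eventually (lt_mem_nhds hi)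

variable {E : Type*} [AddCommGroup E] [Module ℝ E] {f : ι → Dual ℝ E}

theorem IsTightSet.of_subset [Finite ι] {J K : Finset ι} (hJ : IsTightSet f J)
    (hKJ : K ⊆ J) {y : E} (hyK : ∀ i ∈ K, f i y = 0) (hyJ : ∀ i ∈ J \ K, 0 < f i y) :
    IsTightSet f K := by
  obtain ⟨x, hx, hxJ⟩ := hJ
  obtain ⟨t, ht, htpos⟩ := ((eventually_forall_add_mul_pos (fun i => f i x)
    (fun i => f i y)).filter_mono nhdsWithin_le_nhds |>.and
    (self_mem_nhdsWithin (a := (0 : ℝ)) (s := Set.Ioi 0))).exists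
  have value (i : ι) : f i (x + t • y) = f i x + t * f i y := by simp
  have value_zero {i : ι} (hi : i ∈ K) : f i (x + t • y) = 0 := by
    rw [value, (hxJ i).2 (hKJ hi), hyK i hi, mul_zero, add_zero]
  have value_pos {i : ι} (hi : i ∉ K) : 0 < f i (x + t • y) := by
    rw [value]
    by_cases hiJ : i ∈ J
    · rw [(hxJ i).2 hiJ, zero_add]
      exact mul_pos htpos (hyJ i (Finset.mem_sdiff.2 ⟨hiJ, hi⟩))
    · exact ht i ((hx i).lt_of_ne' (mt (hxJ i).1 hiJ))
  refine ⟨x + t • y, fun i => ?_, fun i => ⟨fun h => ?_, value_zero⟩⟩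
  · by_cases hi : i ∈ K
    exacts [(value_zero hi).ge, (value_pos hi).le]
  · by_contra hi
    exact (value_pos hi).ne' h

/-- The linear span of the face of the cone `{x | ∀ i, 0 ≤ f i x}` indexed by a tight set `K`. -/
def tightSubspace (f : ι → Dual ℝ E) (K : Finset ι) : Submodule ℝ E := ⨅ i ∈ K, LinearMap.ker (f i)

theorem mem_tightSubspace {K : Finset ι} {x : E} :
    x ∈ tightSubspace f K ↔ ∀ i ∈ K, f i x = 0 := by
  simp [tightSubspace, Submodule.mem_iInf]

theorem tightSubspace_union (I K : Finset ι) :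
    tightSubspace f (I ∪ K) = tightSubspace f I ⊓ tightSubspace f K :=
  Finset.iInf_union

theorem sliceSign_tightSubspace [Finite ι] {I J L : Finset ι} (hIJ : I ⊆ J)
    (hJ : IsTightSet f J) (hL : L ⊆ J \ I) :
    sliceSign (tightSubspace f I ⊓ tightSubspace f L)
        (Set.univ ∩ {x | ∀ j ∈ (J \ I) \ L, 0 < f j x}) =
      if IsTightSet f (I ∪ L) then (-1) ^ finrank ℝ (tightSubspace f (I ∪ L))
      else 0 := by
  rw [← tightSubspace_union, sdiff_sdiff_left, Set.univ_inter, sliceSign]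
  congr 1
  refine propext ⟨?_, ?_⟩
  · rintro ⟨x, hxIL, hxpos⟩
    exact hJ.of_subset (Finset.union_subset hIJ (hL.trans Finset.sdiff_subset))
      (mem_tightSubspace.1 hxIL) hxpos
  · rintro ⟨x, hx, hxIL⟩
    exact ⟨x, mem_tightSubspace.2 fun i hi => (hxIL i).2 hi, fun i hi =>
      (hx i).lt_of_ne' (mt (hxIL i).1 (Finset.mem_sdiff.1 hi).2)⟩

/-- The codimension of the span of the face indexed by `K`. -/
noncomputable def tightRank (f : ι → Dual ℝ E) (K : Finset ι) : ℕ :=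
  finrank ℝ E - finrank ℝ (tightSubspace f K)

theorem tightRank_empty : tightRank f ∅ = 0 := by
  have tightSubspace_eq_top : tightSubspace f ∅ = ⊤ :=
    eq_top_iff.2 fun x _ => mem_tightSubspace.2 (by simp)
  rw [tightRank, tightSubspace_eq_top, finrank_top, Nat.sub_self]

variable [FiniteDimensional ℝ E]

theorem alternating_sum_finrank_tightSubspace [Finite ι] {I J : Finset ι} (hIJ : I ⊂ J)
    (hI : IsTightSet f I) (hJ : IsTightSet f J) :
    ∑ K ∈ Finset.Icc I J with IsTightSet f K,
      (-1 : ℚ) ^ finrank ℝ (tightSubspace f K) = 0 := by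
  obtain ⟨x, hx, hxI⟩ := hI
  have union_injOn : Set.InjOn (I ∪ ·) ((J \ I).powerset : Set (Finset ι)) := fun L hL M hM h => by
    have hLI := Finset.disjoint_of_subset_left (Finset.mem_powerset.1 hL) Finset.sdiff_disjoint
    have hMI := Finset.disjoint_of_subset_left (Finset.mem_powerset.1 hM) Finset.sdiff_disjoint
    rw [← Finset.union_sdiff_cancel_left hLI.symm, ← Finset.union_sdiff_cancel_left hMI.symm]
    exact congrArg (· \ I) h
  have neg_mem_tightSubspace : -x ∈ tightSubspace f I :=
    neg_mem (mem_tightSubspace.2 fun i hi => (hxI i).2 hi)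
  have map_neg_lt_zero (i : ι) (hi : i ∈ J \ I) : f i (-x) < 0 := by
    rw [map_neg, neg_lt_zero]
    exact (hx i).lt_of_ne' (mt (hxI i).1 (Finset.mem_sdiff.1 hi).2)
  rw [Finset.Icc_eq_image_powerset hIJ.subset, Finset.sum_filter, Finset.sum_image union_injOn]
  calc _ = coneSum f (J \ I) (tightSubspace f I) Set.univ :=
        Finset.sum_congr rfl fun L hL =>
          (sliceSign_tightSubspace hIJ.subset hJ (Finset.mem_powerset.1 hL)).symm
    _ = 0 := coneSum_eq_zero f (Finset.sdiff_nonempty.2 hIJ.not_subset) convex_univ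
        isLineOpen_univ neg_mem_tightSubspace trivial map_neg_lt_zero

theorem tightRank_lt_tightRank {J K : Finset ι} (hKJ : K ⊂ J)
    (hK : IsTightSet f K) : tightRank f K < tightRank f J := by
  obtain ⟨x, -, hxK⟩ := hK
  obtain ⟨i, hiJ, hiK⟩ := Finset.exists_of_ssubset hKJ
  have tightSubspace_lt : tightSubspace f J < tightSubspace f K :=
    lt_of_le_not_ge (fun y hy => mem_tightSubspace.2 fun i hi =>
      mem_tightSubspace.1 hy i (hKJ.subset hi)) fun h => hiK <| (hxK i).1 <|
        mem_tightSubspace.1 (h (mem_tightSubspace.2 fun i hi => (hxK i).2 hi)) i hiJ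
  have := Submodule.finrank_lt_finrank_of_lt tightSubspace_lt
  have := Submodule.finrank_le (tightSubspace f K)
  simp only [tightRank]
  lia

theorem alternating_sum_tightRank [Finite ι] {I J : {K : Finset ι // IsTightSet f K}}
    (hIJ : I < J) : ∑ K ∈ Finset.Icc I J, (-1 : ℚ) ^ tightRank f K = 0 := by
  simp only [tightRank, neg_one_pow_sub (Submodule.finrank_le _)]
  rw [← Finset.mul_sum, Finset.subtype_Icc_eq,
    Finset.sum_subtype_eq_sum_filter (f := fun K => (-1 : ℚ) ^ finrank ℝ (tightSubspace f K)),
    alternating_sum_finrank_tightSubspace hIJ I.2 J.2, mul_zero]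

end TightSets

/-! ### Faces of convex hulls -/

section ConvexHull

open Module

variable {ι V : Type*} [AddCommGroup V] [Module ℝ V]

theorem isFace_iff_exists_affineMap {P G : Set V} :
    IsFace P G ↔ ∃ l : V →ᵃ[ℝ] ℝ, (∀ x ∈ P, 0 ≤ l x) ∧ {x ∈ P | l x = 0} = G := by
  constructor
  · rintro (rfl | rfl | ⟨L, rfl⟩)
    · exact ⟨0, by simp⟩
    · exact ⟨AffineMap.const ℝ V 1, by simp⟩
    · obtain no_maximizer | ⟨x₀, hx₀, hmax⟩ :=
        Set.eq_empty_or_nonempty {x | x ∈ P ∧ ∀ y ∈ P, L y ≤ L x}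
      · rw [no_maximizer]
        exact ⟨AffineMap.const ℝ V 1, by simp⟩
      · refine ⟨AffineMap.const ℝ V (L x₀) - L.toAffineMap, fun x hx => sub_nonneg.2 (hmax x hx),
          Set.ext fun x => and_congr_right fun hx => ?_⟩
        rw [AffineMap.coe_sub, Pi.sub_apply, sub_eq_zero]
        exact ⟨fun h y hy => (hmax y hy).trans h.le, fun h => (h x₀ hx₀).antisymm (hmax x hx)⟩
  · rintro ⟨l, hl, rfl⟩
    obtain no_zero | ⟨x₀, hx₀, hlx₀⟩ := Set.eq_empty_or_nonempty {x ∈ P | l x = 0}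
    · rw [no_zero]
      exact isFace_empty P
    · refine Or.inr (Or.inr ⟨-l.linear, Set.ext fun x => and_congr_right fun hx => ?_⟩)
      have maximal_iff (y : V) : (-l.linear) y ≤ (-l.linear) x ↔ l x ≤ l y := by
        rw [LinearMap.neg_apply, LinearMap.neg_apply, neg_le_neg_iff, ← sub_nonneg, ← map_sub,
          ← vsub_eq_sub y x, l.linearMap_vsub, vsub_eq_sub, sub_nonneg]
      simp only [maximal_iff]
      exact ⟨fun h y hy => h.le.trans (hl y hy),
        fun h => ((h x₀ hx₀).trans hlx₀.le).antisymm (hl x hx)⟩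

theorem nonneg_of_mem_convexHull {S : Set V} {l : V →ᵃ[ℝ] ℝ} (hl : ∀ x ∈ S, 0 ≤ l x) {x : V}
    (hx : x ∈ convexHull ℝ S) : 0 ≤ l x :=
  convexHull_min hl ((convex_Ici (0 : ℝ)).affine_preimage l) hx

theorem sep_convexHull_eq_convexHull_sep {S : Set V} {l : V →ᵃ[ℝ] ℝ} (hl : ∀ x ∈ S, 0 ≤ l x) :
    {x ∈ convexHull ℝ S | l x = 0} = convexHull ℝ {x ∈ S | l x = 0} := by
  refine Set.Subset.antisymm (fun x hx => ?_) fun x hx =>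
    ⟨convexHull_mono (Set.sep_subset S _) hx,
      convexHull_min (fun y hy => hy.2) ((convex_singleton (0 : ℝ)).affine_preimage l) hx⟩
  suffices convexHull ℝ S ⊆ {x | 0 ≤ l x ∧ (l x = 0 → x ∈ convexHull ℝ {x ∈ S | l x = 0})} from
    (this hx.1).2 hx.2
  refine convexHull_min (fun y hy => ⟨hl y hy, fun h => subset_convexHull ℝ _ ⟨hy, h⟩⟩)
    (convex_iff_forall_pos.2 ?_)
  rintro y ⟨hy, hy₀⟩ z ⟨hz, hz₀⟩ a b ha hb hab
  have map_combo : l (a • y + b • z) = a * l y + b * l z := by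
    simpa using Convex.combo_affine_apply (f := l) hab
  refine ⟨by rw [map_combo]; positivity, fun h => ?_⟩
  rw [map_combo, add_eq_zero_iff_of_nonneg (by positivity) (by positivity), mul_eq_zero,
    mul_eq_zero, or_iff_right ha.ne', or_iff_right hb.ne'] at h
  exact convex_convexHull ℝ _ (hy₀ h.1) (hz₀ h.2) ha.le hb.le hab

/-- Evaluation of affine functions at `x`. Through it a point configuration becomes a family of
constraints on affine functions, and faces of the convex hull become tight sets. -/
def affineEval (x : V) : Dual ℝ (V →ᵃ[ℝ] ℝ) where
  toFun l := l x
  map_add' _ _ := rfl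
  map_smul' _ _ := rfl

/-- The index sets of the faces of the convex hull of the points `v i`. -/
abbrev FaceIndex (v : ι → V) : Type _ :=
  {K : Finset ι // IsTightSet (fun i => affineEval (v i)) K}

/-- The hull of the points indexed by `K`. -/
def hullFace (v : ι → V) (K : Finset ι) : Set V := convexHull ℝ (v '' K)

variable {v : ι → V}

theorem sep_hullFace_eq_hullFace_filter {K : Finset ι} {l : V →ᵃ[ℝ] ℝ}
    (hl : ∀ i ∈ K, 0 ≤ l (v i)) :
    {x ∈ hullFace v K | l x = 0} = hullFace v {i ∈ K | l (v i) = 0} := by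
  rw [hullFace, sep_convexHull_eq_convexHull_sep (Set.forall_mem_image.2 hl), hullFace]
  congr 1
  ext x
  simp only [Set.mem_ofPred_eq, Set.mem_image, Finset.coe_filter, Finset.mem_coe]
  grind

theorem hullFace_eq_sep_of_subset {K K' : Finset ι} (hKK' : K' ⊆ K) {l : V →ᵃ[ℝ] ℝ}
    (hl : ∀ i, 0 ≤ l (v i)) (hlK' : ∀ i, l (v i) = 0 ↔ i ∈ K') :
    {x ∈ hullFace v K | l x = 0} = hullFace v K' := by
  rw [sep_hullFace_eq_hullFace_filter fun i _ => hl i]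
  congr 1
  ext i
  simpa only [Finset.mem_filter, hlK'] using and_iff_right_of_imp (@hKK' i)

theorem isFace_hullFace_iff [Finite ι] (K : FaceIndex v) (G : Set V) :
    IsFace (hullFace v K) G ↔ ∃ K' ≤ K, hullFace v K' = G := by
  rw [isFace_iff_exists_affineMap]
  constructor
  · rintro ⟨l, hl, rfl⟩
    have nonneg (i : ι) (hi : i ∈ K.1) : 0 ≤ l (v i) := hl _ (subset_convexHull ℝ _ ⟨i, hi, rfl⟩)
    have tight : IsTightSet (fun i => affineEval (v i)) {i ∈ K.1 | l (v i) = 0} :=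
      K.2.of_subset (y := l) (Finset.filter_subset _ _)
        (fun i hi => (Finset.mem_filter.1 hi).2) fun i hi => by
          obtain ⟨hiK, hi⟩ := Finset.mem_sdiff.1 hi
          exact (nonneg i hiK).lt_of_ne' fun h => hi (Finset.mem_filter.2 ⟨hiK, h⟩)
    exact ⟨⟨_, tight⟩, Finset.filter_subset _ _, (sep_hullFace_eq_hullFace_filter nonneg).symm⟩
  · rintro ⟨⟨K', l, hl, hlK'⟩, hle, rfl⟩
    exact ⟨l, fun x => nonneg_of_mem_convexHull (Set.forall_mem_image.2 fun i _ => hl i),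
      hullFace_eq_sep_of_subset hle hl hlK'⟩

theorem le_of_hullFace_subset {K K' : FaceIndex v} (h : hullFace v K ⊆ hullFace v K') :
    K ≤ K' := by
  obtain ⟨K', l, hl, hlK'⟩ := K'
  intro i hi
  have mem : v i ∈ hullFace v K' := h (subset_convexHull ℝ _ ⟨i, hi, rfl⟩)
  rw [← hullFace_eq_sep_of_subset subset_rfl hl hlK'] at mem
  exact (hlK' i).1 mem.2

theorem hullFace_injective : Function.Injective fun K : FaceIndex v => hullFace v K :=
  fun _ _ h => le_antisymm (le_of_hullFace_subset h.le) (le_of_hullFace_subset h.ge)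

variable (v) in
/-- The dimension of `hullFace v K`, plus one. -/
noncomputable def faceRank (K : Finset ι) : ℕ := tightRank (fun i => affineEval (v i)) K

theorem linear_mem_dualAnnihilator_vectorSpan_iff {S : Set V} {p : V} (hp : p ∈ S)
    {l : V →ᵃ[ℝ] ℝ} (hlp : l p = 0) :
    l.linear ∈ (vectorSpan ℝ S).dualAnnihilator ↔ ∀ x ∈ S, l x = 0 := by
  have linear_sub (x : V) : l.linear (x -ᵥ p) = l x := by
    rw [l.linearMap_vsub, hlp, vsub_eq_sub, sub_zero]
  have le_ker_iff : l.linear ∈ (vectorSpan ℝ S).dualAnnihilator ↔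
      vectorSpan ℝ S ≤ LinearMap.ker l.linear := Submodule.mem_dualAnnihilator _
  rw [le_ker_iff, vectorSpan_eq_span_vsub_set_right ℝ hp, Submodule.span_le, Set.image_subset_iff]
  exact forall₂_congr fun x _ => by
    rw [Set.mem_preimage, SetLike.mem_coe, LinearMap.mem_ker, linear_sub]

theorem finrank_tightSubspace_affineEval {K : Finset ι} (hK : K.Nonempty) :
    finrank ℝ (tightSubspace (fun i => affineEval (v i)) K) =
      finrank ℝ (vectorSpan ℝ (v '' K)).dualAnnihilator := by
  obtain ⟨i, hi⟩ := hK
  let linearPart : (V →ᵃ[ℝ] ℝ) →ₗ[ℝ] Dual ℝ V :=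
    LinearMap.snd ℝ ℝ (Dual ℝ V) ∘ₗ (AffineMap.toConstProdLinearMap ℝ).toLinearMap
  have linearPart_mem_iff {l : V →ᵃ[ℝ] ℝ} (hl : l (v i) = 0) :
      linearPart l ∈ (vectorSpan ℝ (v '' K)).dualAnnihilator ↔
        l ∈ tightSubspace (fun i => affineEval (v i)) K := by
    rw [mem_tightSubspace]
    exact (linear_mem_dualAnnihilator_vectorSpan_iff (Set.mem_image_of_mem v hi) hl).trans
      Set.forall_mem_image
  have map_eq_zero {l : V →ᵃ[ℝ] ℝ} (hl : l ∈ tightSubspace (fun i => affineEval (v i)) K) :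
      l (v i) = 0 := mem_tightSubspace.1 hl i hi
  refine (LinearEquiv.ofBijective (linearPart.restrict fun l hl =>
    (linearPart_mem_iff (map_eq_zero hl)).2 hl) ⟨?_, ?_⟩).finrank_eq
  · refine (injective_iff_map_eq_zero _).2 ?_
    rintro ⟨l, hl⟩ h
    have linear_eq_zero : l.linear = 0 := congrArg Subtype.val h
    ext x
    have := l.linearMap_vsub x (v i)
    simpa [linear_eq_zero, map_eq_zero hl] using this.symm
  · rintro ⟨φ, hφ⟩
    let l : V →ᵃ[ℝ] ℝ := φ.toAffineMap - AffineMap.const ℝ V (φ (v i))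
    have linear_eq : l.linear = φ := by simp [l]
    have hl : l (v i) = 0 := sub_self (φ (v i))
    exact ⟨⟨l, (linearPart_mem_iff hl).1 (by rwa [← linear_eq] at hφ)⟩, Subtype.ext linear_eq⟩

variable [FiniteDimensional ℝ V]

theorem pdim_hullFace (K : Finset ι) : pdim (hullFace v K) = (faceRank v K : ℤ) - 1 := by
  obtain rfl | ⟨i, hi⟩ := K.eq_empty_or_nonempty
  · simp [hullFace, pdim_empty, faceRank, tightRank_empty]
  have finrank_affineMap : finrank ℝ (V →ᵃ[ℝ] ℝ) = finrank ℝ V + 1 := by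
    rw [AffineMap.finrank_eq, finrank_self, mul_one]
  have finrank_add := Subspace.finrank_add_finrank_dualAnnihilator_eq (vectorSpan ℝ (v '' K))
  have nonempty : (hullFace v K).Nonempty := ⟨v i, subset_convexHull ℝ _ ⟨i, hi, rfl⟩⟩
  rw [pdim_of_nonempty nonempty, hullFace, ← direction_affineSpan, affineSpan_convexHull,
    direction_affineSpan, faceRank, tightRank,
    finrank_tightSubspace_affineEval ⟨i, hi⟩]
  lia

theorem isFaceParametrization_hullFace [Finite ι] :
    IsFaceParametrization (fun K : FaceIndex v => hullFace v K)
      fun K : FaceIndex v => faceRank v K :=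
  ⟨hullFace_injective, fun K => pdim_hullFace K.1, isFace_hullFace_iff⟩

variable [Fintype ι]

instance : BoundedOrder (FaceIndex v) where
  top := ⟨Finset.univ, 0, fun _ => le_rfl, fun i => iff_of_true rfl (Finset.mem_univ i)⟩
  le_top K := Finset.subset_univ K.1
  bot := ⟨∅, AffineMap.const ℝ V 1, fun _ => zero_le_one,
    fun i => iff_of_false one_ne_zero (Finset.notMem_empty i)⟩
  bot_le K := Finset.empty_subset K.1

theorem isEulerianRank_faceRank : IsEulerianRank fun K : FaceIndex v => faceRank v K where
  strictMono K _ hKJ := tightRank_lt_tightRank hKJ K.2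
  map_bot := tightRank_empty
  alternating_sum_Icc _ _ h := alternating_sum_tightRank h

end ConvexHull

/-! ### Faces of polyhedra -/

section Polyhedron

open Filter Topology

variable {ι V : Type*} [AddCommGroup V] [Module ℝ V]

/-- The face of the polyhedron `{x | ∀ i, 0 ≤ s i x}` on which the constraints in `K` are tight. -/
def polyhedronFace (s : ι → V →ᵃ[ℝ] ℝ) (K : Finset ι) : Set V :=
  {x | (∀ i, 0 ≤ s i x) ∧ ∀ i ∈ K, s i x = 0}

variable {s : ι → V →ᵃ[ℝ] ℝ} {K K' : Finset ι}

theorem polyhedronFace_subset (h : K ⊆ K') : polyhedronFace s K' ⊆ polyhedronFace s K :=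
  fun _ hx => ⟨hx.1, fun i hi => hx.2 i (h hi)⟩

theorem IsTightSet.subset_of_polyhedronFace_subset (hK : IsTightSet s K)
    (h : polyhedronFace s K ⊆ polyhedronFace s K') : K' ⊆ K := by
  obtain ⟨x, hx, hxK⟩ := hK
  exact fun i hi => (hxK i).1 ((h ⟨hx, fun j hj => (hxK j).2 hj⟩).2 i hi)

theorem isFace_polyhedronFace (h : K ⊆ K') :
    IsFace (polyhedronFace s K) (polyhedronFace s K') := by
  have sum_apply (x : V) : (∑ i ∈ K', s i) x = ∑ i ∈ K', s i x :=
    map_sum (affineEval x) s K'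
  refine isFace_iff_exists_affineMap.2 ⟨∑ i ∈ K', s i, fun x hx => ?_, Set.ext fun x =>
    ⟨fun ⟨hx, hsum⟩ => ⟨hx.1, ?_⟩, fun hx => ⟨polyhedronFace_subset h hx, ?_⟩⟩⟩
  · rw [sum_apply]
    exact Finset.sum_nonneg fun i _ => hx.1 i
  · rwa [sum_apply, Finset.sum_eq_zero_iff_of_nonneg fun i _ => hx.1 i] at hsum
  · rw [sum_apply, Finset.sum_eq_zero hx.2]

theorem eventually_add_smul_mem_polyhedronFace [Finite ι] {x z : V} (hx : ∀ i, 0 ≤ s i x)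
    (hxK : ∀ i, s i x = 0 ↔ i ∈ K) (hz : ∀ i ∈ K, (s i).linear z = 0) :
    ∀ᶠ t in 𝓝 (0 : ℝ), x + t • z ∈ polyhedronFace s K := by
  have map_add_smul (i : ι) (t : ℝ) : s i (x + t • z) = s i x + t * (s i).linear z := by
    rw [add_comm, ← vadd_eq_add, (s i).map_vadd, map_smul, vadd_eq_add, smul_eq_mul, add_comm]
  filter_upwards [eventually_forall_add_mul_pos (s · x) fun i => (s i).linear z] with t ht
  have map_eq_zero (i : ι) (hi : i ∈ K) : s i (x + t • z) = 0 := by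
    rw [map_add_smul, (hxK i).2 hi, hz i hi, mul_zero, add_zero]
  refine ⟨fun i => ?_, map_eq_zero⟩
  by_cases hi : i ∈ K
  · exact (map_eq_zero i hi).ge
  · rw [map_add_smul]
    exact (ht i ((hx i).lt_of_ne' (mt (hxK i).1 hi))).le

theorem eq_zero_on_polyhedronFace [Finite ι] {l : V →ᵃ[ℝ] ℝ}
    (hl : ∀ y ∈ polyhedronFace s K, 0 ≤ l y) {x : V} (hx : ∀ i, 0 ≤ s i x)
    (hxK : ∀ i, s i x = 0 ↔ i ∈ K) (hlx : l x = 0) {y : V} (hy : y ∈ polyhedronFace s K) :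
    l y = 0 := by
  have linear_sub (l : V →ᵃ[ℝ] ℝ) : l.linear (x - y) = l x - l y := l.linearMap_vsub x y
  obtain ⟨t, ht, htpos⟩ := ((eventually_add_smul_mem_polyhedronFace (z := x - y) hx hxK
    fun i hi => by rw [linear_sub, hy.2 i hi, (hxK i).2 hi, sub_zero]).filter_mono
    nhdsWithin_le_nhds |>.and (self_mem_nhdsWithin (a := (0 : ℝ)) (s := Set.Ioi 0))).exists
  have map_beyond := hl _ ht
  rw [add_comm, ← vadd_eq_add, l.map_vadd, map_smul, linear_sub, hlx, vadd_eq_add, add_zero,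
    zero_sub, smul_neg, neg_nonneg, smul_eq_mul] at map_beyond
  exact (nonpos_of_mul_nonpos_right map_beyond htpos).antisymm (hl y hy)

theorem map_midpoint_nonneg {l : V →ᵃ[ℝ] ℝ} {x y : V} (hx : 0 ≤ l x) (hy : 0 ≤ l y) :
    0 ≤ l (midpoint ℝ x y) := by
  rw [l.map_midpoint, midpoint_eq_smul_add, smul_eq_mul]
  exact mul_nonneg (by simp) (add_nonneg hx hy)

theorem map_midpoint_eq_zero_iff {l : V →ᵃ[ℝ] ℝ} {x y : V} (hx : 0 ≤ l x) (hy : 0 ≤ l y) :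
    l (midpoint ℝ x y) = 0 ↔ l x = 0 ∧ l y = 0 := by
  rw [l.map_midpoint, midpoint_eq_smul_add, smul_eq_mul, mul_eq_zero, or_iff_right (by simp),
    add_eq_zero_iff_of_nonneg hx hy]

theorem IsFace.exists_eq_polyhedronFace [Finite ι] {G : Set V}
    (hG : IsFace (polyhedronFace s K) G) (hne : G.Nonempty) :
    ∃ K', IsTightSet s K' ∧ K ⊆ K' ∧ polyhedronFace s K' = G := by
  obtain ⟨l, hl, rfl⟩ := isFace_iff_exists_affineMap.1 hG
  have := Fintype.ofFinite ι
  let tight (x : V) : Finset ι := {i | s i x = 0}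
  have mem_tight (x : V) (i : ι) : s i x = 0 ↔ i ∈ tight x := by simp [tight]
  -- A point of `G` with the fewest tight constraints lies in the relative interior of `G`.
  obtain ⟨x, ⟨hx, hlx⟩, hmin⟩ := exists_minimalFor_of_wellFoundedLT _ tight hne
  have subset_tight : K ⊆ tight x := fun i hi => (mem_tight x i).1 (hx.2 i hi)
  refine ⟨tight x, ⟨x, hx.1, mem_tight x⟩, subset_tight,
    Set.Subset.antisymm (fun y hy => ⟨polyhedronFace_subset subset_tight hy, ?_⟩)
    fun y ⟨hy, hly⟩ => ⟨hy.1, ?_⟩⟩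
  · exact eq_zero_on_polyhedronFace (fun z hz => hl z (polyhedronFace_subset subset_tight hz)) hx.1
      (mem_tight x) hlx hy
  · have midpoint_mem : midpoint ℝ x y ∈ {x ∈ polyhedronFace s K | l x = 0} :=
      ⟨⟨fun i => map_midpoint_nonneg (hx.1 i) (hy.1 i), fun i hi =>
        (map_midpoint_eq_zero_iff (hx.1 i) (hy.1 i)).2 ⟨hx.2 i hi, hy.2 i hi⟩⟩,
        (map_midpoint_eq_zero_iff (hl x hx) (hl y hy)).2 ⟨hlx, hly⟩⟩
    have tight_midpoint {i : ι} (hi : i ∈ tight (midpoint ℝ x y)) : s i x = 0 ∧ s i y = 0 :=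
      (map_midpoint_eq_zero_iff (hx.1 i) (hy.1 i)).1 ((mem_tight _ i).2 hi)
    have tight_le := hmin midpoint_mem fun i hi => (mem_tight x i).1 (tight_midpoint hi).1
    exact fun i hi => (tight_midpoint (tight_le hi)).2

theorem vectorSpan_polyhedronFace [Finite ι] (hK : IsTightSet s K) :
    vectorSpan ℝ (polyhedronFace s K) = tightSubspace (fun i => (s i).linear) K := by
  obtain ⟨x, hx, hxK⟩ := hK
  have hxmem : x ∈ polyhedronFace s K := ⟨hx, fun i hi => (hxK i).2 hi⟩
  refine le_antisymm ?_ fun z hz => ?_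
  · refine Submodule.span_le.2 ?_
    rintro _ ⟨y, hy, y', hy', rfl⟩
    refine mem_tightSubspace.2 fun i hi => ?_
    change (s i).linear (y -ᵥ y') = 0
    rw [(s i).linearMap_vsub, hy.2 i hi, hy'.2 i hi, vsub_self]
  · obtain ⟨t, ht, htne⟩ := ((eventually_add_smul_mem_polyhedronFace hx hxK
      (mem_tightSubspace.1 hz)).filter_mono nhdsWithin_le_nhds |>.and
      (self_mem_nhdsWithin (a := (0 : ℝ)) (s := {0}ᶜ))).exists
    have smul_mem := vsub_mem_vectorSpan ℝ ht hxmem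
    rw [vsub_eq_sub, add_sub_cancel_left] at smul_mem
    exact (Submodule.smul_mem_iff _ htne).1 smul_mem

end Polyhedron

/-! ### Faces of the polar polytope -/

section Polar

open Module

theorem affineMap_eq_zero_of_mem_interior {V : Type*} [AddCommGroup V] [Module ℝ V]
    [TopologicalSpace V] [IsTopologicalAddGroup V] [ContinuousSMul ℝ V] {P : Set V} {x : V}
    (hx : x ∈ interior P) {l : V →ᵃ[ℝ] ℝ} (hl : ∀ y ∈ P, 0 ≤ l y) (hlx : l x = 0) : l = 0 := by
  have isLocalMin : IsLocalMin l x := by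
    filter_upwards [mem_interior_iff_mem_nhds.1 hx] with y hy
    exact hlx.le.trans (hl y hy)
  have nonneg (y : V) : 0 ≤ l y := hlx.ge.trans <| IsMinOn.of_isLocalMin_of_convex_univ isLocalMin
    ((convexOn_id convex_univ).comp_affineMap l) y
  have map_reflection (y : V) : l (AffineEquiv.pointReflection ℝ x y) = -l y := by
    rw [AffineEquiv.pointReflection_apply, l.map_vadd, l.linearMap_vsub, hlx]
    simp
  ext y
  exact (neg_nonneg.1 (map_reflection y ▸ nonneg _)).antisymm (nonneg y)

variable {ι : Type*} {n : ℕ}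

/-- The homogeneous affine function `x ↦ ⟨w, x⟩`, depending linearly on `w`. -/
noncomputable def dotAffine : (Fin n → ℝ) →ₗ[ℝ] ((Fin n → ℝ) →ᵃ[ℝ] ℝ) :=
  (AffineMap.toConstProdLinearMap ℝ).symm.toLinearMap ∘ₗ
    LinearMap.inr ℝ ℝ (Dual ℝ (Fin n → ℝ)) ∘ₗ (dotProductEquiv ℝ (Fin n)).toLinearMap

theorem dotAffine_apply (w x : Fin n → ℝ) : dotAffine w x = w ⬝ᵥ x := by
  simp [dotAffine]

theorem dotAffine_injective : Function.Injective (dotAffine (n := n)) :=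
  (AffineMap.toConstProdLinearMap ℝ).symm.injective.comp
    (LinearMap.inr_injective.comp (dotProductEquiv ℝ (Fin n)).injective)

theorem exists_dotAffine_eq {l : (Fin n → ℝ) →ᵃ[ℝ] ℝ} (hl : l 0 = 0) : ∃ w, dotAffine w = l := by
  obtain ⟨w, hw⟩ := (dotProductEquiv ℝ (Fin n)).surjective l.linear
  refine ⟨w, AffineMap.ext fun x => ?_⟩
  rw [dotAffine_apply, l.decomp, ← hw]
  simp [hl]

/-- The affine function `x ↦ 1 + ⟨w, x⟩`, whose nonnegativity is the constraint that `w` imposes on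
polar points. -/
noncomputable def affineSlack (w : Fin n → ℝ) : (Fin n → ℝ) →ᵃ[ℝ] ℝ :=
  AffineMap.const ℝ _ 1 + dotAffine w

theorem affineSlack_apply (w x : Fin n → ℝ) : affineSlack w x = 1 + w ⬝ᵥ x := by
  simp [affineSlack, dotAffine_apply]

theorem affineSlack_comm (w x : Fin n → ℝ) : affineSlack w x = affineSlack x w := by
  rw [affineSlack_apply, affineSlack_apply, dotProduct_comm]

theorem affineSlack_zero (w : Fin n → ℝ) : affineSlack w 0 = 1 := by
  rw [affineSlack_apply, dotProduct_zero, add_zero]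

theorem linear_affineSlack_apply (w x : Fin n → ℝ) : (affineSlack w).linear x = w ⬝ᵥ x := by
  rw [AffineMap.decomp', Pi.sub_apply, affineSlack_apply, affineSlack_zero, add_sub_cancel_left]

theorem exists_affineSlack_eq {l : (Fin n → ℝ) →ᵃ[ℝ] ℝ} (hl : l 0 = 1) :
    ∃ w, affineSlack w = l := by
  obtain ⟨w, hw⟩ := exists_dotAffine_eq (l := l - AffineMap.const ℝ _ 1) (by simp [hl])
  exact ⟨w, by rw [affineSlack, hw, add_sub_cancel]⟩

/-- The face of the polar of the convex hull of the points `v i` dual to `hullFace v K`. -/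
def polarFace (v : ι → Fin n → ℝ) (K : Finset ι) : Set (Fin n → ℝ) :=
  polyhedronFace (fun i => affineSlack (v i)) K

variable {v : ι → Fin n → ℝ}

theorem isTightSet_affineEval_of_affineSlack {K : Finset ι}
    (hK : IsTightSet (fun i => affineSlack (v i)) K) :
    IsTightSet (fun i => affineEval (v i)) K := by
  obtain ⟨w, hw, hwK⟩ := hK
  have eval_eq (i : ι) : affineEval (v i) (affineSlack w) = affineSlack (v i) w :=
    affineSlack_comm w (v i)
  exact ⟨affineSlack w, fun i => (hw i).trans_eq (eval_eq i).symm, fun i => by rw [eval_eq, hwK]⟩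

theorem map_dotAffine_tightSubspace (K : Finset ι) :
    (tightSubspace (fun i => (affineSlack (v i)).linear) K).map dotAffine =
      tightSubspace (fun i => affineEval (v i)) K ⊓ LinearMap.ker (affineEval 0) := by
  have mem_iff (w : Fin n → ℝ) :
      dotAffine w ∈ tightSubspace (fun i => affineEval (v i)) K ↔
        w ∈ tightSubspace (fun i => (affineSlack (v i)).linear) K := by
    rw [mem_tightSubspace, mem_tightSubspace]
    refine forall₂_congr fun i _ => ?_
    rw [linear_affineSlack_apply, dotProduct_comm, ← dotAffine_apply]
    rfl
  refine le_antisymm ?_ fun l ⟨hlK, hl0⟩ => ?_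
  · rintro _ ⟨w, hw, rfl⟩
    exact ⟨(mem_iff w).2 hw, (dotAffine_apply w 0).trans (dotProduct_zero w)⟩
  · obtain ⟨w, hw⟩ := exists_dotAffine_eq hl0
    exact ⟨w, (mem_iff w).1 (hw ▸ hlK), hw⟩

theorem finrank_tightSubspace_linear_affineSlack (K : Finset ι) :
    finrank ℝ (tightSubspace (fun i => (affineSlack (v i)).linear) K) =
      finrank ℝ ↥(tightSubspace (fun i => affineEval (v i)) K ⊓ LinearMap.ker (affineEval 0)) := by
  rw [← map_dotAffine_tightSubspace]
  exact (Submodule.equivMapOfInjective dotAffine dotAffine_injective _).finrank_eq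

variable [Fintype ι]

theorem polarSet_hullFace_univ : polarSet (hullFace v Finset.univ) = polarFace v ∅ := by
  ext w
  have mem_polarSet_iff (P : Set (Fin n → ℝ)) :
      w ∈ polarSet P ↔ ∀ x ∈ P, 0 ≤ affineSlack w x := by
    refine forall₂_congr fun x _ => ?_
    rw [affineSlack_comm, affineSlack_apply, ← neg_le_iff_add_nonneg']
    rfl
  rw [mem_polarSet_iff]
  constructor
  · intro h
    refine ⟨fun i => ?_, by simp⟩
    rw [affineSlack_comm]
    exact h _ (subset_convexHull ℝ _ ⟨i, Finset.mem_univ i, rfl⟩)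
  · rintro ⟨h, -⟩ x
    refine nonneg_of_mem_convexHull (Set.forall_mem_image.2 fun i _ => ?_)
    rw [affineSlack_comm]
    exact h i

theorem polarFace_univ (h0 : 0 ∈ hullFace v Finset.univ) : polarFace v Finset.univ = ∅ := by
  refine Set.eq_empty_of_forall_notMem fun w hw => ?_
  have zero_mem : (0 : Fin n → ℝ) ∈ {x ∈ hullFace v Finset.univ | affineSlack w x = 0} := by
    rwa [hullFace_eq_sep_of_subset subset_rfl] <;> intro i <;> rw [affineSlack_comm]
    · exact hw.1 i
    · exact iff_of_true (hw.2 i (Finset.mem_univ i)) (Finset.mem_univ i)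
  exact one_ne_zero ((affineSlack_zero w).symm.trans zero_mem.2)

variable (h0 : 0 ∈ interior (hullFace v Finset.univ))

include h0

theorem pos_at_zero_of_isTightSet {K : FaceIndex v} (hK : K ≠ ⊤) {l : (Fin n → ℝ) →ᵃ[ℝ] ℝ}
    (hl : ∀ i, 0 ≤ l (v i)) (hlK : ∀ i, l (v i) = 0 ↔ i ∈ K.1) : 0 < l 0 := by
  have nonneg (x : Fin n → ℝ) (hx : x ∈ hullFace v Finset.univ) : 0 ≤ l x :=
    nonneg_of_mem_convexHull (Set.forall_mem_image.2 fun i _ => hl i) hx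
  refine (nonneg 0 (interior_subset h0)).lt_of_ne' fun hl0 => hK (top_le_iff.1 fun i _ => ?_)
  rw [← hlK, affineMap_eq_zero_of_mem_interior h0 nonneg hl0]
  rfl

theorem isTightSet_affineSlack {K : FaceIndex v} (hK : K ≠ ⊤) :
    IsTightSet (fun i => affineSlack (v i)) K.1 := by
  obtain ⟨l, hl, hlK⟩ := K.2
  have hl0 := pos_at_zero_of_isTightSet h0 hK hl hlK
  obtain ⟨w, hw⟩ := exists_affineSlack_eq (l := (l 0)⁻¹ • l) (inv_mul_cancel₀ hl0.ne')
  have slack_eq (i : ι) : affineSlack (v i) w = (l 0)⁻¹ * l (v i) := by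
    rw [affineSlack_comm, hw]
    rfl
  refine ⟨w, fun i => ?_, fun i => ?_⟩
  · rw [slack_eq]
    exact mul_nonneg (inv_nonneg.2 hl0.le) (hl i)
  · rw [slack_eq, mul_eq_zero, or_iff_right (inv_ne_zero hl0.ne')]
    exact hlK i

theorem isFace_polarFace_iff (K : FaceIndex v) (G : Set (Fin n → ℝ)) :
    IsFace (polarFace v K) G ↔ ∃ K' : FaceIndex v, K ≤ K' ∧ polarFace v K' = G := by
  constructor
  · intro hG
    obtain rfl | hne := G.eq_empty_or_nonempty
    · exact ⟨⊤, le_top, polarFace_univ (interior_subset h0)⟩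
    · obtain ⟨K', hK', hKK', rfl⟩ := hG.exists_eq_polyhedronFace hne
      exact ⟨⟨K', isTightSet_affineEval_of_affineSlack hK'⟩, hKK', rfl⟩
  · rintro ⟨K', hKK', rfl⟩
    exact isFace_polyhedronFace hKK'

theorem le_of_polarFace_subset {K K' : FaceIndex v} (h : polarFace v K ⊆ polarFace v K') :
    K' ≤ K := by
  obtain rfl | hK := eq_or_ne K ⊤
  exacts [le_top, (isTightSet_affineSlack h0 hK).subset_of_polyhedronFace_subset h]

theorem polarFace_injective : Function.Injective fun K : FaceIndex v => polarFace v K :=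
  fun _ _ h => le_antisymm (le_of_polarFace_subset h0 h.ge) (le_of_polarFace_subset h0 h.le)

theorem faceRank_top : faceRank v (⊤ : FaceIndex v) = n + 1 := by
  have hdim := pdim_hullFace (v := v) Finset.univ
  have nonempty : (hullFace v Finset.univ).Nonempty := ⟨0, interior_subset h0⟩
  have affineSpan_eq_top : affineSpan ℝ (hullFace v Finset.univ) = ⊤ :=
    (affineSpan_convexHull _).trans (affineSpan_eq_top_of_nonempty_interior ⟨0, h0⟩)
  rw [pdim_of_nonempty nonempty, ← direction_affineSpan, affineSpan_eq_top,
    AffineSubspace.direction_top, finrank_top, finrank_fin_fun] at hdim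
  change faceRank v Finset.univ = n + 1
  lia

theorem pdim_polarFace (K : FaceIndex v) :
    pdim (polarFace v K) = (n : ℤ) - faceRank v K := by
  obtain rfl | hK := eq_or_ne K ⊤
  · rw [faceRank_top h0]
    change pdim (polarFace v Finset.univ) = _
    rw [polarFace_univ (interior_subset h0), pdim_empty]
    lia
  have tight := isTightSet_affineSlack h0 hK
  have nonempty : (polarFace v K).Nonempty := by
    obtain ⟨w, hw, hwK⟩ := tight
    exact ⟨w, hw, fun i hi => (hwK i).2 hi⟩
  have not_le_ker : ¬tightSubspace (fun i => affineEval (v i)) K.1 ≤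
      LinearMap.ker (affineEval 0) := by
    obtain ⟨l, hl, hlK⟩ := K.2
    exact fun h => (pos_at_zero_of_isTightSet h0 hK hl hlK).ne'
      (h (mem_tightSubspace.2 fun i hi => (hlK i).2 hi))
  have finrank_add_one := finrank_inf_ker_add_one not_le_ker
  have finrank_le := Submodule.finrank_le (tightSubspace (fun i => affineEval (v i)) K.1)
  have finrank_affineMap : finrank ℝ ((Fin n → ℝ) →ᵃ[ℝ] ℝ) = n + 1 := by
    rw [AffineMap.finrank_eq, finrank_self, mul_one, finrank_fin_fun]
  rw [pdim_of_nonempty nonempty, polarFace, vectorSpan_polyhedronFace tight,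
    finrank_tightSubspace_linear_affineSlack, faceRank, tightRank]
  lia

open OrderDual in
theorem isFaceParametrization_polarFace :
    IsFaceParametrization (fun K : (FaceIndex v)ᵒᵈ => polarFace v (ofDual K).1)
      (dualRank fun K : FaceIndex v => faceRank v K) := by
  refine ⟨(polarFace_injective h0).comp ofDual.injective, fun K => ?_, fun K G => ?_⟩
  · have := isEulerianRank_faceRank.le_rank_top (ofDual K)
    have := faceRank_top h0
    rw [pdim_polarFace h0, dualRank]
    lia
  · exact isFace_polarFace_iff h0 (ofDual K) G

theorem coeff_toricG_hullFace_eq_polarFace {k : ℕ} (hn : n = 2 * k) :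
    (toricG (hullFace v Finset.univ)).coeff k = (toricG (polarFace v ∅)).coeff k :=
  have eulerian := isEulerianRank_faceRank (v := v)
  eulerian.coeff_middle_eq (isFaceParametrization_hullFace.isToricG eulerian.strictMono)
    ((isFaceParametrization_polarFace h0).isToricG eulerian.dual.strictMono)
    (by rw [faceRank_top h0, hn])

end Polar

/-- For a polytope of even dimension `2k` with `0` in its interior,
`g_k(P) = g_k(P*)`. -/
theorem g_middle_polar (k : ℕ) (P : Set (Fin (2 * k) → ℝ)) (hP : IsPolytope P)
    (hdim : pdim P = (2 * k : ℤ)) (h0 : (0 : Fin (2 * k) → ℝ) ∈ interior P) :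
    (toricG P).coeff k = (toricG (polarSet P)).coeff k := by
  obtain ⟨S, rfl⟩ := hP
  have hull_eq : convexHull ℝ (S : Set (Fin (2 * k) → ℝ)) =
      hullFace (fun x : S => x.1) Finset.univ := by
    simp [hullFace]
  rw [hull_eq] at h0 ⊢
  rw [polarSet_hullFace_univ, coeff_toricG_hullFace_eq_polarFace h0 rfl]
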